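/- arXiv:2006.12627 — 7 statements merged into one kernel-verified Lean document; each statement's English description precedes it below -/
import Mathlib

section
/- In the decay setup, the following hold: (a) Ĉ ‖v‖_b² − ‖v‖_b + 𝔠 ‖v₀‖ ≥ 0; and (b) if moreover 4Ĉ𝔠‖v₀‖ ≤ 1 and ‖v‖_b < (1 + √(1 − 4Ĉ𝔠‖v₀‖))/(2Ĉ), then ‖v‖_b ≤ 2𝔠‖v₀‖, i.e. ‖v_t‖ ≤ 2𝔠‖v₀‖ e^{−bt} for every t ≥ 0. -/
/-!
Write `N = ‖v‖_b`. Since `‖v_s‖ ≤ N e^{-bs}`, the quadratic nonlinearity decays at twice the rate: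
`‖G(s)‖ ≤ C_F N² e^{-2bs}`. The surplus rate makes the Duhamel integral at most
`(𝔠/b) C_F N² e^{-bt}` uniformly in the length of the interval, and the tail integral of `G` is at
most `C_F N² e^{-2bt} / (2b)`. Taking the weighted supremum of the integral equation gives
`N ≤ 𝔠‖v₀‖ + Ĉ N²`. So `N` avoids the open interval between the two roots of the quadratic; if it
lies below the larger root, it is at most the smaller one, which does not exceed `2𝔠‖v₀‖` because
`1 - x ≤ √(1 - x)` for `x ≥ 0`.
-/

open MeasureTheory
open scoped InnerProductSpace BigOperators

theorem two_mul_add_le_neg_sqrt_discrim {a b c x : ℝ} (ha : 0 ≤ a)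
    (hquad : 0 ≤ a * x ^ 2 + b * x + c) (hx : 2 * a * x + b < √(discrim a b c)) :
    2 * a * x + b ≤ -√(discrim a b c) := by
  have hdiscrim : discrim a b c ≤ (2 * a * x + b) ^ 2 := by
    rw [discrim]
    linear_combination 4 * mul_nonneg ha hquad
  have hsqrt : √(discrim a b c) ≤ |2 * a * x + b| :=
    (Real.sqrt_le_sqrt hdiscrim).trans_eq (Real.sqrt_sq_eq_abs _)
  exact le_neg_of_le_neg ((le_abs.1 hsqrt).resolve_left hx.not_ge)

theorem le_two_mul_of_lt_larger_root {C a n : ℝ} (hC : 0 < C) (ha : 0 ≤ a)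
    (hquad : 0 ≤ C * n ^ 2 - n + a) (hn : n < (1 + √(1 - 4 * C * a)) / (2 * C)) :
    n ≤ 2 * a := by
  have hdiscrim : discrim C (-1) a = 1 - 4 * C * a := by rw [discrim]; ring
  have hroot : 2 * C * n + -1 ≤ -√(1 - 4 * C * a) := by
    rw [lt_div_iff₀ (by positivity)] at hn
    rw [← hdiscrim] at hn ⊢
    exact two_mul_add_le_neg_sqrt_discrim hC.le (by linarith) (by linarith)
  have hsqrt : 1 - 4 * C * a ≤ √(1 - 4 * C * a) :=
    Real.le_sqrt_self_iff.2 (sub_le_self 1 (by positivity))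
  have hscaled : 2 * C * n ≤ 2 * C * (2 * a) := by linarith
  exact le_of_mul_le_mul_left hscaled (by positivity)

theorem le_iff_forall_le_mul_exp_of_isLUB {b N M : ℝ} {f : ℝ → ℝ}
    (hN : IsLUB {r : ℝ | ∃ t : ℝ, 0 ≤ t ∧ r = Real.exp (b * t) * f t} N) :
    N ≤ M ↔ ∀ t, 0 ≤ t → f t ≤ M * Real.exp (-b * t) := by
  have hweight (t : ℝ) : Real.exp (b * t) * f t ≤ M ↔ f t ≤ M * Real.exp (-b * t) := by
    rw [neg_mul, Real.exp_neg, ← div_eq_mul_inv, le_div_iff₀' (Real.exp_pos _)]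
  rw [isLUB_le_iff hN]
  constructor
  · exact fun hM t ht ↦ (hweight t).1 (hM ⟨t, ht, rfl⟩)
  · rintro hM _ ⟨t, ht, rfl⟩
    exact (hweight t).2 (hM t ht)

section ExponentialIntegrals

variable {E F : Type*} [NormedAddCommGroup E] [NormedSpace ℝ E]
  [NormedAddCommGroup F] [NormedSpace ℝ F]

theorem norm_integral_Ioi_le_of_norm_le_mul_exp {a K t : ℝ} {g : ℝ → E} (ha : 0 < a)
    (hg : ∀ s, t < s → ‖g s‖ ≤ K * Real.exp (-a * s)) :
    ‖∫ s in Set.Ioi t, g s‖ ≤ K / a * Real.exp (-a * t) := by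
  have hint : IntegrableOn (fun s ↦ K * Real.exp (-a * s)) (Set.Ioi t) :=
    (integrableOn_exp_mul_Ioi (neg_neg_of_pos ha) t).const_mul K
  calc ‖∫ s in Set.Ioi t, g s‖
      ≤ ∫ s in Set.Ioi t, K * Real.exp (-a * s) :=
        norm_integral_le_of_norm_le hint ((ae_restrict_mem measurableSet_Ioi).mono hg)
    _ = K / a * Real.exp (-a * t) := by
        rw [integral_const_mul, integral_exp_mul_Ioi (neg_neg_of_pos ha), neg_div_neg_eq]
        ring

theorem norm_duhamel_integral_le {a b c K t : ℝ} {V : ℝ → E →L[ℝ] F} {G : ℝ → E}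
    (hab : b < a) (ht : 0 ≤ t)
    (hV : ∀ s, 0 ≤ s → ‖V s‖ ≤ c * Real.exp (-b * s))
    (hG : ∀ s, 0 ≤ s → ‖G s‖ ≤ K * Real.exp (-a * s)) :
    ‖∫ s in (0 : ℝ)..t, V (t - s) (G s)‖ ≤ c * K / (a - b) * Real.exp (-b * t) := by
  have hintegrand : ∀ s ∈ Set.Ioc 0 t,
      ‖V (t - s) (G s)‖ ≤ c * K * Real.exp (-b * t) * Real.exp (-(a - b) * s) := by
    intro s hs
    have hVts := hV (t - s) (sub_nonneg.2 hs.2)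
    calc ‖V (t - s) (G s)‖
        ≤ c * Real.exp (-b * (t - s)) * (K * Real.exp (-a * s)) :=
          (V (t - s)).le_of_opNorm_le_of_le hVts (hG s hs.1.le)
      _ = c * K * Real.exp (-b * t) * Real.exp (-(a - b) * s) := by
          rw [mul_mul_mul_comm, mul_assoc (c * K), ← Real.exp_add, ← Real.exp_add]
          ring_nf
  have hc : 0 ≤ c := by simpa using (norm_nonneg _).trans (hV 0 le_rfl)
  have hK : 0 ≤ K := by simpa using (norm_nonneg _).trans (hG 0 le_rfl)
  have hextend : ∫ s in (0 : ℝ)..t, V (t - s) (G s) =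
      ∫ s in Set.Ioi 0, (Set.Ioc 0 t).indicator (fun s ↦ V (t - s) (G s)) s := by
    rw [intervalIntegral.integral_of_le ht, setIntegral_indicator measurableSet_Ioc,
      Set.inter_eq_self_of_subset_right Set.Ioc_subset_Ioi_self]
  calc ‖∫ s in (0 : ℝ)..t, V (t - s) (G s)‖
      ≤ c * K * Real.exp (-b * t) / (a - b) * Real.exp (-(a - b) * 0) := by
        rw [hextend]
        refine norm_integral_Ioi_le_of_norm_le_mul_exp (sub_pos.2 hab) fun s _ ↦ ?_
        rw [norm_indicator_eq_indicator_norm]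
        exact Set.indicator_apply_le' (hintegrand s) fun _ ↦ by positivity
    _ = c * K / (a - b) * Real.exp (-b * t) := by
        rw [mul_zero, Real.exp_zero]
        ring

end ExponentialIntegrals

section LyapunovPerron

variable {E : Type*} [NormedAddCommGroup E] [NormedSpace ℝ E]

/-- The Lyapunov–Perron map at time `t`, for a forcing `G` along a trajectory starting at `x`:
the part of the forcing seen by the decaying family `V` is integrated forward from time `0`, the
part seen by `P` backward from time `∞`. The paper's `P` is the finite-rank operator
`∑ᵢ φᵢ ⟨ψⁱ, ·⟩`. -/
noncomputable def lyapunovPerron (V : ℝ → E →L[ℝ] E) (P : E →L[ℝ] E) (G : ℝ → E) (x : E)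
    (t : ℝ) : E :=
  V t x + (∫ s in (0 : ℝ)..t, V (t - s) (G s)) - P (∫ s in Set.Ioi t, G s)

variable {V : ℝ → E →L[ℝ] E} {P : E →L[ℝ] E} {G : ℝ → E} {v : ℝ → E}

theorem norm_lyapunovPerron_le {a b c p K t : ℝ} (ha : 0 < a) (hab : b < a) (ht : 0 ≤ t)
    (hV : ∀ s, 0 ≤ s → ‖V s‖ ≤ c * Real.exp (-b * s)) (hP : ‖P‖ ≤ p)
    (hG : ∀ s, 0 ≤ s → ‖G s‖ ≤ K * Real.exp (-a * s)) (x : E) :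
    ‖lyapunovPerron V P G x t‖ ≤
      (c * ‖x‖ + K * (c / (a - b) + p / a)) * Real.exp (-b * t) := by
  have hK : 0 ≤ K := by simpa using (norm_nonneg _).trans (hG 0 le_rfl)
  have hfree : ‖V t x‖ ≤ c * Real.exp (-b * t) * ‖x‖ := (V t).le_of_opNorm_le (hV t ht) x
  have htail : ‖P (∫ s in Set.Ioi t, G s)‖ ≤ p * (K / a * Real.exp (-b * t)) := by
    refine P.le_of_opNorm_le_of_le hP ?_
    calc ‖∫ s in Set.Ioi t, G s‖
        ≤ K / a * Real.exp (-a * t) :=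
          norm_integral_Ioi_le_of_norm_le_mul_exp ha fun s hs ↦ hG s (ht.trans hs.le)
      _ ≤ K / a * Real.exp (-b * t) := by gcongr
  calc ‖lyapunovPerron V P G x t‖
      ≤ ‖V t x‖ + ‖∫ s in (0 : ℝ)..t, V (t - s) (G s)‖ + ‖P (∫ s in Set.Ioi t, G s)‖ :=
        (norm_sub_le _ _).trans (by gcongr; exact norm_add_le _ _)
    _ ≤ c * Real.exp (-b * t) * ‖x‖ + c * K / (a - b) * Real.exp (-b * t)
          + p * (K / a * Real.exp (-b * t)) := by
        gcongr
        exact norm_duhamel_integral_le hab ht hV hG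
    _ = (c * ‖x‖ + K * (c / (a - b) + p / a)) * Real.exp (-b * t) := by ring

theorem norm_le_of_eq_lyapunovPerron {b c p CF N t : ℝ} (hb : 0 < b) (hCF : 0 ≤ CF) (ht : 0 ≤ t)
    (hV : ∀ s, 0 ≤ s → ‖V s‖ ≤ c * Real.exp (-b * s)) (hP : ‖P‖ ≤ p)
    (hv : ∀ s, 0 ≤ s → ‖v s‖ ≤ N * Real.exp (-b * s))
    (hG : ∀ s, 0 ≤ s → ‖G s‖ ≤ CF * ‖v s‖ ^ 2)
    (heq : v t = lyapunovPerron V P G (v 0) t) :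
    ‖v t‖ ≤ (c * ‖v 0‖ + CF * (c / b + 1 / (2 * b) * p) * N ^ 2) * Real.exp (-b * t) := by
  have hGdecay : ∀ s, 0 ≤ s → ‖G s‖ ≤ CF * N ^ 2 * Real.exp (-(2 * b) * s) := by
    intro s hs
    calc ‖G s‖ ≤ CF * ‖v s‖ ^ 2 := hG s hs
      _ ≤ CF * (N * Real.exp (-b * s)) ^ 2 := by
        gcongr
        exact hv s hs
      _ = CF * N ^ 2 * Real.exp (-(2 * b) * s) := by
        rw [mul_pow, ← Real.exp_nat_mul]
        ring_nf
  calc ‖v t‖ = ‖lyapunovPerron V P G (v 0) t‖ := by rw [heq]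
    _ ≤ (c * ‖v 0‖ + CF * N ^ 2 * (c / (2 * b - b) + p / (2 * b))) * Real.exp (-b * t) :=
        norm_lyapunovPerron_le (by positivity) (by linarith) ht hV hP hGdecay (v 0)
    _ = (c * ‖v 0‖ + CF * (c / b + 1 / (2 * b) * p) * N ^ 2) * Real.exp (-b * t) := by
        rw [two_mul b, add_sub_cancel_right]
        ring

end LyapunovPerron

theorem amplitude_decay_bound_general
    {E : Type*} [NormedAddCommGroup E] [NormedSpace ℝ E] [CompleteSpace E]
    {b c CF p : ℝ} (hb : 0 < b) (hc : 0 < c) (hCF : 0 < CF)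
    {P : E →L[ℝ] E} (hP : ‖P‖ ≤ p)
    {V : ℝ → E →L[ℝ] E}
    (hV : ∀ t, 0 ≤ t → ‖V t‖ ≤ c * Real.exp (-b * t))
    (_hVcont : ∀ x, ContinuousOn (fun t ↦ V t x) (Set.Ici 0))
    {v : ℝ → E} {N : ℝ}
    (hN : IsLUB {r : ℝ | ∃ t : ℝ, 0 ≤ t ∧ r = Real.exp (b * t) * ‖v t‖} N)
    {G : ℝ → E}
    (_hGmeas : AEStronglyMeasurable G (volume.restrict (Set.Ici 0)))
    (hG : ∀ s, 0 ≤ s → ‖G s‖ ≤ CF * ‖v s‖ ^ 2)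
    (heq : ∀ t, 0 ≤ t → v t = lyapunovPerron V P G (v 0) t)
    {Ch : ℝ} (hCh : Ch = CF * (c / b + 1 / (2 * b) * p)) :
    0 ≤ Ch * N ^ 2 - N + c * ‖v 0‖ ∧
      (4 * Ch * (c * ‖v 0‖) ≤ 1 →
        N < (1 + √(1 - 4 * Ch * (c * ‖v 0‖))) / (2 * Ch) →
          N ≤ 2 * c * ‖v 0‖ ∧
            ∀ t, 0 ≤ t → ‖v t‖ ≤ 2 * c * ‖v 0‖ * Real.exp (-b * t)) := by
  have hp : 0 ≤ p := (norm_nonneg P).trans hP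
  have hChpos : 0 < Ch := by rw [hCh]; positivity
  have hdecay {M : ℝ} : N ≤ M ↔ ∀ t, 0 ≤ t → ‖v t‖ ≤ M * Real.exp (-b * t) :=
    le_iff_forall_le_mul_exp_of_isLUB hN
  have hselfbound : N ≤ c * ‖v 0‖ + Ch * N ^ 2 := hdecay.2 fun t ht ↦ by
    rw [hCh]
    exact norm_le_of_eq_lyapunovPerron hb hCF.le ht hV hP (hdecay.1 le_rfl) hG (heq t ht)
  have hquad : 0 ≤ Ch * N ^ 2 - N + c * ‖v 0‖ := by linarith
  refine ⟨hquad, fun _ hroot ↦ ?_⟩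
  have hsmall : N ≤ 2 * c * ‖v 0‖ := by
    rw [mul_assoc]
    exact le_two_mul_of_lt_larger_root hChpos (by positivity) hquad hroot
  exact ⟨hsmall, hdecay.1 hsmall⟩

/-- In the decay setup (an amplitude `v` solving the integral equation
`v_t = V(t)v₀ + ∫₀^t V(t-s) G(s) ds - Σᵢ ⟪ψᵢ, ∫_t^∞ G(s) ds⟫ φᵢ` with `‖V(t)‖ ≤ 𝔠 e^{-bt}`
and `‖G(s)‖ ≤ C_F ‖v_s‖²`, and `nb = ‖v‖_b = sup_{t≥0} e^{bt}‖v_t‖`):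
(a) `Ĉ nb² - nb + 𝔠 ‖v₀‖ ≥ 0`, where `Ĉ = C_F (𝔠/b + (1/(2b)) Σᵢ ‖φᵢ‖ ‖ψᵢ‖)`; and
(b) if `4 Ĉ 𝔠 ‖v₀‖ ≤ 1` and `nb` lies strictly below the larger root of the quadratic, then
`nb ≤ 2 𝔠 ‖v₀‖`, i.e. `‖v_t‖ ≤ 2 𝔠 ‖v₀‖ e^{-bt}` for every `t ≥ 0`. -/
theorem amplitude_decay_bound
    {H : Type*} [NormedAddCommGroup H] [InnerProductSpace ℝ H] [CompleteSpace H]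
    {m : ℕ} (hm : 1 ≤ m)
    (b frakc CF : ℝ) (hb : 0 < b) (hfrakc : 1 ≤ frakc) (hCF : 0 < CF)
    (φ ψ : Fin m → H)
    (V : ℝ → H →L[ℝ] H)
    (hV : ∀ t : ℝ, 0 ≤ t → ‖V t‖ ≤ frakc * Real.exp (-b * t))
    (hVcont : ∀ x : H, ContinuousOn (fun t => V t x) (Set.Ici (0:ℝ)))
    (v : ℝ → H) (hv : ContinuousOn v (Set.Ici (0:ℝ)))
    (nb : ℝ)
    (hnb : IsLUB {r : ℝ | ∃ t : ℝ, 0 ≤ t ∧ r = Real.exp (b * t) * ‖v t‖} nb)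
    (G : ℝ → H)
    (hG : AEStronglyMeasurable G (volume.restrict (Set.Ici (0:ℝ))))
    (hGbound : ∀ s : ℝ, 0 ≤ s → ‖G s‖ ≤ CF * ‖v s‖ ^ 2)
    (heq : ∀ t : ℝ, 0 ≤ t →
      v t = V t (v 0) + (∫ s in (0:ℝ)..t, V (t - s) (G s))
        - ∑ i, ⟪ψ i, ∫ s in Set.Ioi t, G s⟫_ℝ • φ i)
    (Ch : ℝ) (hCh : Ch = CF * (frakc / b + (1 / (2 * b)) * ∑ i, ‖φ i‖ * ‖ψ i‖)) :
    0 ≤ Ch * nb ^ 2 - nb + frakc * ‖v 0‖ ∧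
      (4 * Ch * (frakc * ‖v 0‖) ≤ 1 →
        nb < (1 + Real.sqrt (1 - 4 * Ch * (frakc * ‖v 0‖))) / (2 * Ch) →
          nb ≤ 2 * frakc * ‖v 0‖ ∧
            ∀ t : ℝ, 0 ≤ t → ‖v t‖ ≤ 2 * frakc * ‖v 0‖ * Real.exp (-b * t)) :=
  amplitude_decay_bound_general (P := ∑ i, InnerProductSpace.rankOne ℝ (φ i) (ψ i)) hb (by linarith)
    hCF ((norm_sum_le _ _).trans_eq (by simp)) hV hVcont hnb hG hGbound
    (fun t ht ↦ by simpa [lyapunovPerron] using heq t ht) hCh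
end

section
/- In the phase-map setup, for every u ∈ O at which Φ is Fréchet differentiable and every w ∈ H, the derivative a := DΦ(u)·w ∈ ℝ^m satisfies the linear system Σ_{j=1}^m M_{ij}(u) a_j = ⟨ψ^i_{Φ(u)}, w⟩ for each 1 ≤ i ≤ m, where M_{ij}(u) := δ_{ij} − ⟨u − φ_{Φ(u)}, ψ^i_{Φ(u),j}⟩. -/
open scoped InnerProductSpace BigOperators

/-!
Write `a = DΦ(u) w` and keep `i` fixed. The identity `⟪v - φ (Φ v), ψ i (Φ v)⟫ = 0` holds for all
`v` near `u`, so its derivative at `u` in the direction `w` vanishes: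
`⟪u - φ (Φ u), Dψ i a⟫ + ⟪w - Dφ a, ψ i (Φ u)⟫ = 0`. Solving for `⟪ψ i (Φ u), w⟫` shows that it
depends linearly on `a`, and biorthogonality makes the `φ` part of the coefficient of `a j` equal
to `δ i j`.
-/

open scoped Topology

section ImplicitDifferentiation

variable {E F H : Type*} [NormedAddCommGroup E] [NormedSpace ℝ E]
  [NormedAddCommGroup F] [NormedSpace ℝ F] [NormedAddCommGroup H] [InnerProductSpace ℝ H]

theorem inner_fderiv_add_inner_fderiv_eq_zero_of_eventually_inner_eq
    {f g : F → H} {f' g' : F →L[ℝ] H} {x : F} {c : ℝ}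
    (hf : HasFDerivAt f f' x) (hg : HasFDerivAt g g' x)
    (hc : ∀ᶠ y in 𝓝 x, ⟪f y, g y⟫_ℝ = c) (w : F) :
    ⟪f x, g' w⟫_ℝ + ⟪f' w, g x⟫_ℝ = 0 := by
  have hconst : HasFDerivAt (fun y ↦ ⟪f y, g y⟫_ℝ) (0 : F →L[ℝ] ℝ) x :=
    (hasFDerivAt_const c x).congr_of_eventuallyEq hc
  simpa using DFunLike.congr_fun ((hf.inner ℝ hg).unique hconst) w

theorem inner_eq_inner_fderiv_sub_of_eventually_inner_sub_eq
    {φ ψ : E → H} {Φ : H → E} {φ' ψ' : E →L[ℝ] H} {Φ' : H →L[ℝ] E} {u : H} {c : ℝ}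
    (hφ : HasFDerivAt φ φ' (Φ u)) (hψ : HasFDerivAt ψ ψ' (Φ u)) (hΦ : HasFDerivAt Φ Φ' u)
    (hc : ∀ᶠ v in 𝓝 u, ⟪v - φ (Φ v), ψ (Φ v)⟫_ℝ = c) (w : H) :
    ⟪ψ (Φ u), w⟫_ℝ = ⟪ψ (Φ u), φ' (Φ' w)⟫_ℝ - ⟪u - φ (Φ u), ψ' (Φ' w)⟫_ℝ := by
  have hdiff : ⟪u - φ (Φ u), ψ' (Φ' w)⟫_ℝ + ⟪w - φ' (Φ' w), ψ (Φ u)⟫_ℝ = 0 :=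
    inner_fderiv_add_inner_fderiv_eq_zero_of_eventually_inner_eq
      ((hasFDerivAt_id u).sub (hφ.comp u hΦ)) (hψ.comp u hΦ) hc w
  rw [real_inner_comm (ψ (Φ u)), inner_sub_right] at hdiff
  linarith

end ImplicitDifferentiation

theorem inner_map_eq_sum_inner_map_basis_mul_repr
    {ι E H : Type*} [Fintype ι] [AddCommGroup E] [Module ℝ E]
    [SeminormedAddCommGroup H] [InnerProductSpace ℝ H]
    (b : Module.Basis ι ℝ E) (x : H) (L : E →ₗ[ℝ] H) (a : E) :
    ⟪x, L a⟫_ℝ = ∑ j, ⟪x, L (b j)⟫_ℝ * b.repr a j := by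
  conv_lhs => rw [← b.sum_repr a]
  simp only [map_sum, map_smul, inner_sum, real_inner_smul_right, mul_comm]

theorem phase_map_derivative_linear_system_general
    {ι E H : Type*} [Fintype ι] [DecidableEq ι] [NormedAddCommGroup E] [NormedSpace ℝ E]
    [NormedAddCommGroup H] [InnerProductSpace ℝ H] (b : Module.Basis ι ℝ E)
    {φ : E → H} {ψ : ι → E → H} {Φ : H → E}
    {φ' : E →L[ℝ] H} {ψ' : ι → E →L[ℝ] H} {Φ' : H →L[ℝ] E} {u : H}
    (hφ : HasFDerivAt φ φ' (Φ u)) (hψ : ∀ i, HasFDerivAt (ψ i) (ψ' i) (Φ u))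
    (hΦ : HasFDerivAt Φ Φ' u)
    (hvar : ∀ i, ∀ᶠ v in 𝓝 u, ⟪v - φ (Φ v), ψ i (Φ v)⟫_ℝ = 0)
    (hbio : ∀ i j, ⟪ψ i (Φ u), φ' (b j)⟫_ℝ = if i = j then 1 else 0) (w : H) (i : ι) :
    ∑ j, ((if i = j then 1 else 0) - ⟪u - φ (Φ u), ψ' i (b j)⟫_ℝ) * b.repr (Φ' w) j
      = ⟪ψ i (Φ u), w⟫_ℝ := by
  symm
  calc ⟪ψ i (Φ u), w⟫_ℝ
      = ⟪ψ i (Φ u), φ' (Φ' w)⟫_ℝ - ⟪u - φ (Φ u), ψ' i (Φ' w)⟫_ℝ :=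
        inner_eq_inner_fderiv_sub_of_eventually_inner_sub_eq hφ (hψ i) hΦ (hvar i) w
    _ = ∑ j, ⟪ψ i (Φ u), φ' (b j)⟫_ℝ * b.repr (Φ' w) j
          - ∑ j, ⟪u - φ (Φ u), ψ' i (b j)⟫_ℝ * b.repr (Φ' w) j :=
        congrArg₂ (· - ·) (inner_map_eq_sum_inner_map_basis_mul_repr b _ φ'.toLinearMap _)
          (inner_map_eq_sum_inner_map_basis_mul_repr b _ (ψ' i).toLinearMap _)
    _ = ∑ j, ((if i = j then 1 else 0) - ⟪u - φ (Φ u), ψ' i (b j)⟫_ℝ) * b.repr (Φ' w) j := by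
        simp only [hbio, sub_mul, Finset.sum_sub_distrib]

/-- In the phase-map setup (Φ satisfying the variational-phase identity
`⟪u - φ_{Φ(u)}, ψ^i_{Φ(u)}⟫ = 0` on an open set `O`, with biorthogonality
`⟪ψ^i_α, φ_{α,j}⟫ = δ_{ij}`), at every `u ∈ O` where `Φ` is Fréchet differentiable the
derivative `a = DΦ(u)·w` solves `Σ_j M_{ij}(u) a_j = ⟪ψ^i_{Φ(u)}, w⟫` where
`M_{ij}(u) = δ_{ij} - ⟪u - φ_{Φ(u)}, ψ^i_{Φ(u),j}⟫`. -/
theorem phase_map_derivative_linear_system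
    {H : Type*} [NormedAddCommGroup H] [InnerProductSpace ℝ H] [CompleteSpace H]
    {m : ℕ} (hm : 1 ≤ m)
    (O : Set H) (hO : IsOpen O)
    (φ : EuclideanSpace ℝ (Fin m) → H)
    (Dφ : EuclideanSpace ℝ (Fin m) → EuclideanSpace ℝ (Fin m) →L[ℝ] H)
    (hφ : ∀ α, HasFDerivAt φ (Dφ α) α) (hφC : Continuous Dφ)
    (ψ : Fin m → EuclideanSpace ℝ (Fin m) → H)
    (Dψ : Fin m → EuclideanSpace ℝ (Fin m) → EuclideanSpace ℝ (Fin m) →L[ℝ] H)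
    (hψ : ∀ i α, HasFDerivAt (ψ i) (Dψ i α) α) (hψC : ∀ i, Continuous (Dψ i))
    (Φ : H → EuclideanSpace ℝ (Fin m))
    (hvar : ∀ u ∈ O, ∀ i : Fin m, ⟪u - φ (Φ u), ψ i (Φ u)⟫_ℝ = 0)
    (hbio : ∀ (α : EuclideanSpace ℝ (Fin m)) (i j : Fin m),
      ⟪ψ i α, Dφ α (EuclideanSpace.single j 1)⟫_ℝ = if i = j then (1:ℝ) else 0)
    (u : H) (hu : u ∈ O)
    (DΦu : H →L[ℝ] EuclideanSpace ℝ (Fin m))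
    (hΦu : HasFDerivAt Φ DΦu u)
    (w : H) :
    ∀ i : Fin m,
      ∑ j, ((if i = j then (1:ℝ) else 0)
              - ⟪u - φ (Φ u), Dψ i (Φ u) (EuclideanSpace.single j 1)⟫_ℝ) * (DΦu w) j
        = ⟪ψ i (Φ u), w⟫_ℝ := by
  simpa using phase_map_derivative_linear_system_general
    (EuclideanSpace.basisFun (Fin m) ℝ).toBasis (hφ (Φ u)) (fun i ↦ hψ i (Φ u)) hΦu
    (fun i ↦ Filter.eventually_of_mem (hO.mem_nhds hu) (hvar · · i)) (by simpa using hbio (Φ u)) w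
end

section
/- In the phase-map setup, suppose in addition that α ∈ ℝ^m is such that φ_α ∈ O and Φ(φ_α) = α. Then for every w ∈ H and every 1 ≤ i ≤ m: (DΦ(φ_α)·w)^i = ⟨ψ^i_α, w⟩. That is, at points on the manifold the Fréchet derivative of the phase map is exactly the projection onto the adjoint neutral eigenmodes. -/
open scoped InnerProductSpace BigOperators

/-!
Regard `ψ i α` as the functional `⟪ψ i α, ·⟫`. On the manifold the residual `u - φ (Φ u)` vanishes,
so in the product `ψ i (Φ u) (u - φ (Φ u)) = 0` the variation of `ψ i (Φ u)` contributes only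
`o(‖u - φ α‖)`. Differentiating there in the direction `w` leaves `ψ i α (w - Dφ (DΦ w)) = 0`.
Biorthogonality says that `ψ i α ∘ Dφ` is the `i`-th coordinate functional, whence `ψ i α w` is
the `i`-th coordinate of `DΦ w`.
-/

section NormedSpace

open Asymptotics Filter Topology

variable {𝕜 : Type*} [NontriviallyNormedField 𝕜]
  {E : Type*} [NormedAddCommGroup E] [NormedSpace 𝕜 E]
  {F : Type*} [NormedAddCommGroup F] [NormedSpace 𝕜 F]
  {H : Type*} [NormedAddCommGroup H] [NormedSpace 𝕜 H]

theorem hasFDerivAt_clm_apply_of_eq_zero {c : E → F →L[𝕜] H} {f : E → F} {f' : E →L[𝕜] F} {x : E}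
    (hc : ContinuousAt c x) (hf : HasFDerivAt f f' x) (hfx : f x = 0) :
    HasFDerivAt (fun u => c u (f u)) (c x ∘L f') x := by
  have hc_sub : (fun u => c u - c x) =o[𝓝 x] fun _ => (1 : ℝ) :=
    (isLittleO_one_iff ℝ).2 (tendsto_sub_nhds_zero_iff.2 hc)
  have hf_bigO : f =O[𝓝 x] fun u => u - x := by
    simpa only [hfx, sub_zero] using hf.isBigO_sub
  have hprod : (fun u => (c u - c x) (f u)) =o[𝓝 x] fun u => u - x :=
    isBoundedBilinearMap_apply.isBigO_comp.trans_isLittleO <| by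
      simpa only [one_mul, isLittleO_norm_right] using hc_sub.norm_left.mul_isBigO hf_bigO.norm_norm
  have hremainder : HasFDerivAt (fun u => (c u - c x) (f u)) (0 : E →L[𝕜] H) x :=
    .of_isLittleO <| by simpa [hfx] using hprod
  simpa using hremainder.fun_add ((c x).hasFDerivAt.comp x hf)

theorem clm_comp_fderiv_comp_fderiv_phase {φ : E → H} {Φ : H → E} {P : E → H →L[𝕜] F}
    {Dφ : E →L[𝕜] H} {DΦ : H →L[𝕜] E} {α : E}
    (hφ : HasFDerivAt φ Dφ α) (hP : ContinuousAt P α) (hΦ : HasFDerivAt Φ DΦ (φ α))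
    (hΦα : Φ (φ α) = α) (hvar : ∀ᶠ u in 𝓝 (φ α), P (Φ u) (u - φ (Φ u)) = 0) :
    P α ∘L Dφ ∘L DΦ = P α := by
  have hresidual : HasFDerivAt (fun u => u - φ (Φ u)) (.id 𝕜 H - Dφ ∘L DΦ) (φ α) :=
    (hasFDerivAt_id (φ α)).sub (HasFDerivAt.comp (φ α) (by rwa [hΦα]) hΦ)
  have hPΦ : ContinuousAt (fun u => P (Φ u)) (φ α) := hP.comp_of_eq hΦ.continuousAt hΦα
  have hderiv : HasFDerivAt (fun u => P (Φ u) (u - φ (Φ u)))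
      (P (Φ (φ α)) ∘L (.id 𝕜 H - Dφ ∘L DΦ)) (φ α) :=
    hasFDerivAt_clm_apply_of_eq_zero hPΦ hresidual (by rw [hΦα, sub_self])
  have hzero : P α ∘L (.id 𝕜 H - Dφ ∘L DΦ) = 0 := by
    simpa only [hΦα] using hderiv.unique ((hasFDerivAt_const 0 (φ α)).congr_of_eventuallyEq hvar)
  rw [ContinuousLinearMap.comp_sub, ContinuousLinearMap.comp_id, sub_eq_zero] at hzero
  exact hzero.symm

theorem phase_map_derivative_on_manifold_general {ι : Type*} [DecidableEq ι]
    (b : Module.Basis ι 𝕜 E) {φ : E → H} {ψ : ι → E → H →L[𝕜] 𝕜} {Φ : H → E}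
    {Dφ : E →L[𝕜] H} {DΦ : H →L[𝕜] E} {α : E}
    (hφ : HasFDerivAt φ Dφ α) (hψ : ∀ i, ContinuousAt (ψ i) α) (hΦ : HasFDerivAt Φ DΦ (φ α))
    (hΦα : Φ (φ α) = α) (hvar : ∀ i, ∀ᶠ u in 𝓝 (φ α), ψ i (Φ u) (u - φ (Φ u)) = 0)
    (hbio : ∀ i j, ψ i α (Dφ (b j)) = if i = j then 1 else 0) (w : H) (i : ι) :
    b.repr (DΦ w) i = ψ i α w := by
  have hcoord : b.coord i = (ψ i α ∘L Dφ : E →ₗ[𝕜] 𝕜) :=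
    b.ext fun j => by simp [hbio, Finsupp.single_apply, eq_comm]
  calc
    b.repr (DΦ w) i = ψ i α (Dφ (DΦ w)) := DFunLike.congr_fun hcoord (DΦ w)
    _ = ψ i α w :=
      DFunLike.congr_fun (clm_comp_fderiv_comp_fderiv_phase hφ (hψ i) hΦ hΦα (hvar i)) w

end NormedSpace

/-- In the phase-map setup, if `α ∈ ℝ^m` is such that `φ_α ∈ O` and
`Φ(φ_α) = α`, then the Fréchet derivative of the phase map at the on-manifold point `φ_α` is
exactly the projection onto the adjoint neutral eigenmodes: `(DΦ(φ_α)·w)^i = ⟪ψ^i_α, w⟫`. -/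
theorem phase_map_derivative_on_manifold
    {H : Type*} [NormedAddCommGroup H] [InnerProductSpace ℝ H] [CompleteSpace H]
    {m : ℕ} (hm : 1 ≤ m)
    (O : Set H) (hO : IsOpen O)
    (φ : EuclideanSpace ℝ (Fin m) → H)
    (Dφ : EuclideanSpace ℝ (Fin m) → EuclideanSpace ℝ (Fin m) →L[ℝ] H)
    (hφ : ∀ α, HasFDerivAt φ (Dφ α) α) (hφC : Continuous Dφ)
    (ψ : Fin m → EuclideanSpace ℝ (Fin m) → H)
    (Dψ : Fin m → EuclideanSpace ℝ (Fin m) → EuclideanSpace ℝ (Fin m) →L[ℝ] H)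
    (hψ : ∀ i α, HasFDerivAt (ψ i) (Dψ i α) α) (hψC : ∀ i, Continuous (Dψ i))
    (Φ : H → EuclideanSpace ℝ (Fin m))
    (hvar : ∀ u ∈ O, ∀ i : Fin m, ⟪u - φ (Φ u), ψ i (Φ u)⟫_ℝ = 0)
    (hbio : ∀ (α : EuclideanSpace ℝ (Fin m)) (i j : Fin m),
      ⟪ψ i α, Dφ α (EuclideanSpace.single j 1)⟫_ℝ = if i = j then (1:ℝ) else 0)
    (α : EuclideanSpace ℝ (Fin m)) (hmem : φ α ∈ O) (hΦα : Φ (φ α) = α)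
    (DΦu : H →L[ℝ] EuclideanSpace ℝ (Fin m))
    (hΦu : HasFDerivAt Φ DΦu (φ α)) :
    ∀ (w : H) (i : Fin m), (DΦu w) i = ⟪ψ i α, w⟫_ℝ := by
  simpa using phase_map_derivative_on_manifold_general (ψ := fun i β => innerSL ℝ (ψ i β))
    (EuclideanSpace.basisFun (Fin m) ℝ).toBasis (hφ α)
    (fun i => (innerSL ℝ).continuous.continuousAt.comp (hψ i α).continuousAt) hΦu hΦα
    (fun i => Filter.eventually_of_mem (hO.mem_nhds hmem) fun u hu => by
      simpa [real_inner_comm] using hvar u hu i)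
    (by simpa using hbio α)
end

section
/- In the phase-map setup, suppose additionally that ‖ψ^i_{β,j}‖ ≤ K' and ‖ψ^i_β‖ ≤ K_ψ for all β ∈ ℝ^m and 1 ≤ i,j ≤ m, and let u ∈ O satisfy ‖u − φ_{Φ(u)}‖ ≤ 1/(2 m K') (taking K' > 0). Then for every w ∈ H and every 1 ≤ i ≤ m: |(DΦ(u)·w)^i − ⟨ψ^i_{Φ(u)}, w⟩| ≤ 2 m^{3/2} K' K_ψ ‖u − φ_{Φ(u)}‖ ‖w‖. -/
open scoped InnerProductSpace BigOperators

/-!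
Write `v = u - φ (Φ u)` and `a = DΦ(u) w`. Differentiating `⟪x - φ (Φ x), ψ i (Φ x)⟫ = 0` at `u`
in the direction `w` and using biorthogonality gives the implicit equation
`a i = ⟪ψ i (Φ u), w⟫ + ⟪v, Dψ i (Φ u) a⟫`, whose last term is at most `‖v‖ K' ∑ j, |a j|`.
Summing over `i`, the smallness of `v` lets half of `∑ j, |a j|` be absorbed on the left, so that
`∑ j, |a j| ≤ 2 m Kψ ‖w‖`, and the implicit equation then bounds the error with the factor `m` in
place of `m ^ (3/2)`.
-/

open scoped Topology

section Absorption

variable {ι F : Type*} [Fintype ι] [SeminormedAddCommGroup F] {a c : ι → F} {ε M : ℝ}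

theorem sum_norm_le_of_norm_sub_le_mul_sum_norm
    (hac : ∀ i, ‖a i - c i‖ ≤ ε * ∑ j, ‖a j‖) (hc : ∀ i, ‖c i‖ ≤ M)
    (hε : 2 * Fintype.card ι * ε ≤ 1) :
    ∑ i, ‖a i‖ ≤ 2 * Fintype.card ι * M := by
  have hsum : ∑ i, ‖a i‖ ≤ Fintype.card ι * (M + ε * ∑ j, ‖a j‖) := by
    rw [← nsmul_eq_mul]
    refine Finset.sum_le_card_nsmul _ _ _ fun i _ ↦ ?_
    exact (norm_le_norm_add_norm_sub' _ _).trans (add_le_add (hc i) (hac i))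
  have habsorb : 2 * Fintype.card ι * ε * ∑ j, ‖a j‖ ≤ ∑ j, ‖a j‖ :=
    mul_le_of_le_one_left (by positivity) hε
  linarith

theorem norm_sub_le_of_norm_sub_le_mul_sum_norm
    (hac : ∀ i, ‖a i - c i‖ ≤ ε * ∑ j, ‖a j‖) (hc : ∀ i, ‖c i‖ ≤ M)
    (hε₀ : 0 ≤ ε) (hε : 2 * Fintype.card ι * ε ≤ 1) (i : ι) :
    ‖a i - c i‖ ≤ ε * (2 * Fintype.card ι * M) :=
  (hac i).trans <|
    mul_le_mul_of_nonneg_left (sum_norm_le_of_norm_sub_le_mul_sum_norm hac hc hε) hε₀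

end Absorption

section Basis

variable {ι 𝕜 E F : Type*}

theorem norm_map_le_mul_sum_norm_repr [Fintype ι] [NormedField 𝕜] [AddCommMonoid E] [Module 𝕜 E]
    [SeminormedAddCommGroup F] [NormedSpace 𝕜 F] (b : Module.Basis ι 𝕜 E) (L : E →ₗ[𝕜] F) {C : ℝ}
    (hL : ∀ j, ‖L (b j)‖ ≤ C) (x : E) :
    ‖L x‖ ≤ C * ∑ j, ‖b.repr x j‖ :=
  calc ‖L x‖ = ‖∑ j, b.repr x j • L (b j)‖ := by
        simp only [← map_smul, ← map_sum, b.sum_repr]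
    _ ≤ ∑ j, ‖b.repr x j‖ * C := norm_sum_le_of_le _ fun j _ ↦ by
        rw [norm_smul]; gcongr; exact hL j
    _ = C * ∑ j, ‖b.repr x j‖ := by rw [← Finset.sum_mul, mul_comm]

theorem inner_map_eq_repr_of_biorthogonal [DecidableEq ι] [RCLike 𝕜] [AddCommMonoid E] [Module 𝕜 E]
    [SeminormedAddCommGroup F] [InnerProductSpace 𝕜 F] (b : Module.Basis ι 𝕜 E) (L : E →ₗ[𝕜] F)
    {y : F} {i : ι} (hy : ∀ j, ⟪y, L (b j)⟫_𝕜 = if i = j then 1 else 0) (x : E) :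
    ⟪y, L x⟫_𝕜 = b.repr x i := by
  have hcoord : innerₛₗ 𝕜 y ∘ₗ L = b.coord i := b.ext fun j ↦ by
    simpa [Finsupp.single_apply, eq_comm] using hy j
  exact LinearMap.congr_fun hcoord x

end Basis

section Derivative

theorem inner_fderiv_add_inner_fderiv_eq_zero {𝕜 G H : Type*} [RCLike 𝕜]
    [NormedAddCommGroup G] [NormedSpace ℝ G]
    [NormedAddCommGroup H] [InnerProductSpace 𝕜 H] [NormedSpace ℝ H]
    {f g : G → H} {f' g' : G →L[ℝ] H} {u : G}
    (hf : HasFDerivAt f f' u) (hg : HasFDerivAt g g' u)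
    (hfg : ∀ᶠ x in 𝓝 u, ⟪f x, g x⟫_𝕜 = 0) (w : G) :
    ⟪f u, g' w⟫_𝕜 + ⟪f' w, g u⟫_𝕜 = 0 := by
  have hzero : HasFDerivAt (fun x ↦ ⟪f x, g x⟫_𝕜) (0 : G →L[ℝ] 𝕜) u :=
    (hasFDerivAt_const 0 u).congr_of_eventuallyEq hfg
  simpa using DFunLike.congr_fun ((hf.inner 𝕜 hg).unique hzero) w

variable {E H : Type*} [NormedAddCommGroup E] [NormedSpace ℝ E]
  [NormedAddCommGroup H] [InnerProductSpace ℝ H]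

theorem inner_fderiv_phase_eq {φ ψ : E → H} {Dφ Dψ : E →L[ℝ] H} {Φ : H → E} {DΦ : H →L[ℝ] E} {u : H}
    (hφ : HasFDerivAt φ Dφ (Φ u)) (hψ : HasFDerivAt ψ Dψ (Φ u)) (hΦ : HasFDerivAt Φ DΦ u)
    (hvar : ∀ᶠ x in 𝓝 u, ⟪x - φ (Φ x), ψ (Φ x)⟫_ℝ = 0) (w : H) :
    ⟪ψ (Φ u), Dφ (DΦ w)⟫_ℝ = ⟪ψ (Φ u), w⟫_ℝ + ⟪u - φ (Φ u), Dψ (DΦ w)⟫_ℝ := by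
  have hdiff : ⟪u - φ (Φ u), Dψ (DΦ w)⟫_ℝ + ⟪w - Dφ (DΦ w), ψ (Φ u)⟫_ℝ = 0 :=
    inner_fderiv_add_inner_fderiv_eq_zero
      ((hasFDerivAt_id u).sub (hφ.comp u hΦ)) (hψ.comp u hΦ) hvar w
  rw [real_inner_comm (ψ (Φ u)), inner_sub_right] at hdiff
  linarith

theorem phase_map_derivative_first_order_approximation_general
    {ι : Type*} [Fintype ι] [DecidableEq ι] (b : Module.Basis ι ℝ E)
    {φ : E → H} {Dφ : E →L[ℝ] H} {ψ : ι → E → H} {Dψ : ι → E →L[ℝ] H}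
    {Φ : H → E} {DΦ : H →L[ℝ] E} {u : H}
    (hφ : HasFDerivAt φ Dφ (Φ u)) (hψ : ∀ i, HasFDerivAt (ψ i) (Dψ i) (Φ u))
    (hΦ : HasFDerivAt Φ DΦ u)
    (hvar : ∀ i, ∀ᶠ x in 𝓝 u, ⟪x - φ (Φ x), ψ i (Φ x)⟫_ℝ = 0)
    (hbio : ∀ i j, ⟪ψ i (Φ u), Dφ (b j)⟫_ℝ = if i = j then 1 else 0)
    {K' Kψ : ℝ} (hDψbound : ∀ i j, ‖Dψ i (b j)‖ ≤ K') (hψbound : ∀ i, ‖ψ i (Φ u)‖ ≤ Kψ)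
    (hclose : 2 * Fintype.card ι * (‖u - φ (Φ u)‖ * K') ≤ 1) (w : H) (i : ι) :
    |b.repr (DΦ w) i - ⟪ψ i (Φ u), w⟫_ℝ|
      ≤ 2 * Fintype.card ι * K' * Kψ * ‖u - φ (Φ u)‖ * ‖w‖ := by
  have himplicit (k : ι) :
      b.repr (DΦ w) k - ⟪ψ k (Φ u), w⟫_ℝ = ⟪u - φ (Φ u), Dψ k (DΦ w)⟫_ℝ :=
    sub_eq_of_eq_add' <| (inner_map_eq_repr_of_biorthogonal b Dφ.toLinearMap (hbio k) _).symm.trans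
      (inner_fderiv_phase_eq hφ (hψ k) hΦ (hvar k) w)
  have hfeedback (k : ι) : ‖b.repr (DΦ w) k - ⟪ψ k (Φ u), w⟫_ℝ‖
      ≤ ‖u - φ (Φ u)‖ * K' * ∑ j, ‖b.repr (DΦ w) j‖ := by
    rw [himplicit, mul_assoc]
    refine (norm_inner_le_norm _ _).trans ?_
    gcongr
    exact norm_map_le_mul_sum_norm_repr b (Dψ k).toLinearMap (hDψbound k) _
  have hprojection (k : ι) : ‖⟪ψ k (Φ u), w⟫_ℝ‖ ≤ Kψ * ‖w‖ :=
    (norm_inner_le_norm _ _).trans (by gcongr; exact hψbound k)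
  have hK' : 0 ≤ K' := (norm_nonneg _).trans (hDψbound i i)
  calc |b.repr (DΦ w) i - ⟪ψ i (Φ u), w⟫_ℝ|
      ≤ ‖u - φ (Φ u)‖ * K' * (2 * Fintype.card ι * (Kψ * ‖w‖)) :=
        norm_sub_le_of_norm_sub_le_mul_sum_norm hfeedback hprojection (by positivity) hclose i
    _ = 2 * Fintype.card ι * K' * Kψ * ‖u - φ (Φ u)‖ * ‖w‖ := by ring

end Derivative

/-- In the phase-map setup, if `‖ψ^i_{β,j}‖ ≤ K'` and `‖ψ^i_β‖ ≤ K_ψ`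
uniformly, and `u ∈ O` satisfies `‖u - φ_{Φ(u)}‖ ≤ 1/(2 m K')`, then the derivative of the
phase map is the projection onto the adjoint eigenmodes up to an error linear in the distance
from the manifold: `|(DΦ(u)·w)^i - ⟪ψ^i_{Φ(u)}, w⟫| ≤ 2 m^{3/2} K' K_ψ ‖u - φ_{Φ(u)}‖ ‖w‖`. -/
theorem phase_map_derivative_first_order_approximation
    {H : Type*} [NormedAddCommGroup H] [InnerProductSpace ℝ H] [CompleteSpace H]
    {m : ℕ} (hm : 1 ≤ m)
    (O : Set H) (hO : IsOpen O)
    (φ : EuclideanSpace ℝ (Fin m) → H)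
    (Dφ : EuclideanSpace ℝ (Fin m) → EuclideanSpace ℝ (Fin m) →L[ℝ] H)
    (hφ : ∀ α, HasFDerivAt φ (Dφ α) α) (hφC : Continuous Dφ)
    (ψ : Fin m → EuclideanSpace ℝ (Fin m) → H)
    (Dψ : Fin m → EuclideanSpace ℝ (Fin m) → EuclideanSpace ℝ (Fin m) →L[ℝ] H)
    (hψ : ∀ i α, HasFDerivAt (ψ i) (Dψ i α) α) (hψC : ∀ i, Continuous (Dψ i))
    (Φ : H → EuclideanSpace ℝ (Fin m))
    (hvar : ∀ u ∈ O, ∀ i : Fin m, ⟪u - φ (Φ u), ψ i (Φ u)⟫_ℝ = 0)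
    (hbio : ∀ (α : EuclideanSpace ℝ (Fin m)) (i j : Fin m),
      ⟪ψ i α, Dφ α (EuclideanSpace.single j 1)⟫_ℝ = if i = j then (1:ℝ) else 0)
    (K' Kψ : ℝ) (hK' : 0 < K')
    (hDψbound : ∀ (β : EuclideanSpace ℝ (Fin m)) (i j : Fin m),
      ‖Dψ i β (EuclideanSpace.single j 1)‖ ≤ K')
    (hψbound : ∀ (β : EuclideanSpace ℝ (Fin m)) (i : Fin m), ‖ψ i β‖ ≤ Kψ)
    (u : H) (hu : u ∈ O)
    (hclose : ‖u - φ (Φ u)‖ ≤ 1 / (2 * m * K'))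
    (DΦu : H →L[ℝ] EuclideanSpace ℝ (Fin m))
    (hΦu : HasFDerivAt Φ DΦu u) :
    ∀ (w : H) (i : Fin m),
      |(DΦu w) i - ⟪ψ i (Φ u), w⟫_ℝ|
        ≤ 2 * (m : ℝ) ^ ((3:ℝ)/2) * K' * Kψ * ‖u - φ (Φ u)‖ * ‖w‖ := by
  intro w i
  have hKψ : 0 ≤ Kψ := (norm_nonneg _).trans (hψbound (Φ u) i)
  have hsmall : 2 * (m : ℝ) * (‖u - φ (Φ u)‖ * K') ≤ 1 := by
    rw [le_div_iff₀ (by positivity)] at hclose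
    linarith
  have hlinear : |(DΦu w) i - ⟪ψ i (Φ u), w⟫_ℝ| ≤ 2 * m * K' * Kψ * ‖u - φ (Φ u)‖ * ‖w‖ := by
    simpa using phase_map_derivative_first_order_approximation_general
      (EuclideanSpace.basisFun (Fin m) ℝ).toBasis (hφ (Φ u)) (fun k ↦ hψ k (Φ u)) hΦu
      (fun k ↦ Filter.eventually_of_mem (hO.mem_nhds hu) fun x hx ↦ hvar x hx k)
      (by simpa using hbio (Φ u)) (by simpa using hDψbound (Φ u)) (hψbound (Φ u))
      (by simpa using hsmall) w i
  have hpow : (m : ℝ) ≤ (m : ℝ) ^ ((3 : ℝ) / 2) :=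
    Real.self_le_rpow_of_one_le (by exact_mod_cast hm) (by norm_num)
  exact hlinear.trans (by gcongr)
end

section
/- In the phase-map setup, suppose additionally that φ and the ψ^i are twice continuously differentiable, that Φ is twice Fréchet differentiable on O, and that α ∈ ℝ^m is such that φ_α ∈ O and Φ(φ_α) = α. Then for every w ∈ H and every 1 ≤ i ≤ m: (D²Φ(φ_α)·w·w)^i = 2 Σ_{j=1}^m ⟨ψ^j_α, w⟩ ⟨ψ^i_{α,j}, w⟩ − Σ_{j,k=1}^m ⟨φ_{α,j}, ψ^i_{α,k}⟩ ⟨ψ^j_α, w⟩ ⟨ψ^k_α, w⟩. -/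
open scoped InnerProductSpace BigOperators

/-!
Differentiating the variational-phase identity `⟪u - φ (Φ u), ψ i (Φ u)⟫ = 0` and using
biorthogonality in the form `⟪Dφ_β a, ψ i β⟫ = a i` gives, near the manifold,
`(DΦ(u) w) i = ⟪w, ψ i (Φ u)⟫ + ⟪u - φ (Φ u), Dψ i_{Φ u} (DΦ(u) w)⟫`.
On the manifold the offset `u - φ (Φ u)` vanishes. Hence `DΦ(φ_α) w` has coordinates `⟪ψ j α, w⟫`,
and differentiating the formula once more only differentiates the offset in the last term, so that
a single continuous derivative of `ψ i` is enough.
-/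

open Filter Topology Asymptotics

section BilinearProduct

variable {𝕜 X E F G : Type*} [NontriviallyNormedField 𝕜]
  [NormedAddCommGroup X] [NormedSpace 𝕜 X] [NormedAddCommGroup E] [NormedSpace 𝕜 E]
  [NormedAddCommGroup F] [NormedSpace 𝕜 F] [NormedAddCommGroup G] [NormedSpace 𝕜 G]

theorem hasFDerivAt_bilinear_of_left_eq_zero (B : E →L[𝕜] F →L[𝕜] G)
    {f : X → E} {g : X → F} {f' : X →L[𝕜] E} {x : X}
    (hf : HasFDerivAt f f' x) (hfx : f x = 0) (hg : ContinuousAt g x) :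
    HasFDerivAt (fun y ↦ B (f y) (g y)) ((B.flip (g x)).comp f') x := by
  have left_factor_deriv : HasFDerivAt (fun y ↦ B (f y) (g x)) ((B.flip (g x)).comp f') x :=
    (B.flip (g x)).hasFDerivAt.comp x hf
  have f_isBigO : f =O[𝓝 x] fun y ↦ y - x := by simpa [hfx] using hf.isBigO_sub
  have g_sub_isLittleO : (fun y ↦ g y - g x) =o[𝓝 x] fun _ ↦ (1 : ℝ) :=
    (isLittleO_one_iff ℝ).2 (tendsto_sub_nhds_zero_iff.2 hg)
  have remainder_isLittleO : (fun y ↦ B (f y) (g y - g x)) =o[𝓝 x] fun y ↦ y - x := by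
    refine B.isBoundedBilinearMap.isBigO_comp.trans_isLittleO ?_
    simpa using (f_isBigO.norm_norm.mul_isLittleO g_sub_isLittleO.norm_left).norm_right
  have remainder_hasFDerivAt : HasFDerivAt (fun y ↦ B (f y) (g y - g x)) (0 : X →L[𝕜] G) x :=
    .of_isLittleO <| by simpa [hfx] using remainder_isLittleO
  simpa using left_factor_deriv.fun_add remainder_hasFDerivAt

end BilinearProduct

section Coordinates

variable {ι H : Type*} [DecidableEq ι] [NormedAddCommGroup H] [InnerProductSpace ℝ H]

theorem apply_eq_sum_smul_apply_single {𝓕 M : Type*} [Fintype ι] [AddCommMonoid M] [Module ℝ M]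
    [FunLike 𝓕 (EuclideanSpace ℝ ι) M] [LinearMapClass 𝓕 ℝ (EuclideanSpace ℝ ι) M] (L : 𝓕)
    (a : EuclideanSpace ℝ ι) : L a = ∑ j, a j • L (EuclideanSpace.single j 1) := by
  conv_lhs => rw [← (EuclideanSpace.basisFun ι ℝ).sum_repr a]
  simp

theorem inner_apply_eq_coord_of_biorthogonal [Finite ι] {L : EuclideanSpace ℝ ι →L[ℝ] H}
    {x : H} {i : ι}
    (hL : ∀ j, ⟪x, L (EuclideanSpace.single j 1)⟫_ℝ = if i = j then 1 else 0)
    (a : EuclideanSpace ℝ ι) : ⟪L a, x⟫_ℝ = a i := by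
  have := Fintype.ofFinite ι
  rw [real_inner_comm, apply_eq_sum_smul_apply_single, inner_sum]
  simp [real_inner_smul_right, hL]

theorem inner_apply_eq_sum [Fintype ι] (L : EuclideanSpace ℝ ι →L[ℝ] H) (a : EuclideanSpace ℝ ι)
    (x : H) : ⟪x, L a⟫_ℝ = ∑ j, a j * ⟪L (EuclideanSpace.single j 1), x⟫_ℝ := by
  rw [real_inner_comm, apply_eq_sum_smul_apply_single, sum_inner]
  simp only [real_inner_smul_left]

theorem inner_apply_apply_eq_sum_sum [Fintype ι] (L M : EuclideanSpace ℝ ι →L[ℝ] H)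
    (a b : EuclideanSpace ℝ ι) :
    ⟪L a, M b⟫_ℝ =
      ∑ j, ∑ k, ⟪L (EuclideanSpace.single j 1), M (EuclideanSpace.single k 1)⟫_ℝ * a j * b k := by
  rw [apply_eq_sum_smul_apply_single L, sum_inner]
  refine Finset.sum_congr rfl fun j _ ↦ ?_
  rw [inner_apply_eq_sum]
  refine Finset.sum_congr rfl fun k _ ↦ ?_
  rw [real_inner_smul_right, real_inner_comm]
  ring

end Coordinates

section PhaseMap

variable {H E : Type*} [NormedAddCommGroup H] [InnerProductSpace ℝ H]
  [NormedAddCommGroup E] [NormedSpace ℝ E]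
  {φ χ : E → H} {Φ : H → E}

theorem hasFDerivAt_sub_comp_phase {φ' : E →L[ℝ] H} {Φ' : H →L[ℝ] E} {u : H}
    (hφ : HasFDerivAt φ φ' (Φ u)) (hΦ : HasFDerivAt Φ Φ' u) :
    HasFDerivAt (fun v ↦ v - φ (Φ v)) (.id ℝ H - φ'.comp Φ') u :=
  (hasFDerivAt_id u).sub (hφ.comp u hΦ)

theorem inner_tangent_phase_deriv {φ' χ' : E →L[ℝ] H} {Φ' : H →L[ℝ] E} {u : H}
    (hφ : HasFDerivAt φ φ' (Φ u)) (hχ : HasFDerivAt χ χ' (Φ u)) (hΦ : HasFDerivAt Φ Φ' u)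
    (hvar : ∀ᶠ v in 𝓝 u, ⟪v - φ (Φ v), χ (Φ v)⟫_ℝ = 0) (w : H) :
    ⟪φ' (Φ' w), χ (Φ u)⟫_ℝ = ⟪w, χ (Φ u)⟫_ℝ + ⟪u - φ (Φ u), χ' (Φ' w)⟫_ℝ := by
  have inner_deriv := (hasFDerivAt_sub_comp_phase hφ hΦ).inner ℝ (hχ.comp u hΦ)
  have inner_deriv_eq_zero :=
    inner_deriv.unique ((hasFDerivAt_const (0 : ℝ) u).congr_of_eventuallyEq hvar)
  have apply_w := DFunLike.congr_fun inner_deriv_eq_zero w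
  simp only [ContinuousLinearMap.comp_apply, ContinuousLinearMap.prod_apply,
    fderivInnerCLM_apply, sub_apply, ContinuousLinearMap.id_apply, zero_apply,
    Function.comp_apply, inner_sub_left w] at apply_w
  linarith

theorem phase_deriv_on_manifold {φ' χ' : E →L[ℝ] H} {Φ' : H →L[ℝ] E} {ℓ : E → ℝ} {α : E}
    (hφ : HasFDerivAt φ φ' α) (hχ : HasFDerivAt χ χ' α) (hΦ : HasFDerivAt Φ Φ' (φ α))
    (hvar : ∀ᶠ u in 𝓝 (φ α), ⟪u - φ (Φ u), χ (Φ u)⟫_ℝ = 0)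
    (hbio : ∀ a, ⟪φ' a, χ α⟫_ℝ = ℓ a) (hΦα : Φ (φ α) = α) (w : H) :
    ℓ (Φ' w) = ⟪χ α, w⟫_ℝ := by
  have tangent_eq := inner_tangent_phase_deriv (by rwa [hΦα]) (by rwa [hΦα]) hΦ hvar w
  rw [hΦα, sub_self, inner_zero_left, add_zero] at tangent_eq
  rw [← hbio, tangent_eq, real_inner_comm]

theorem phase_second_deriv_of_first_deriv {DΦ : H → H →L[ℝ] E} {D2Φ : H →L[ℝ] H →L[ℝ] E}
    {φ' : E →L[ℝ] H} {χ' : E → E →L[ℝ] H} {ℓ : E →L[ℝ] ℝ} {u : H}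
    (hφ : HasFDerivAt φ φ' (Φ u)) (hχ : HasFDerivAt χ (χ' (Φ u)) (Φ u))
    (hχ' : ContinuousAt χ' (Φ u)) (hΦ : HasFDerivAt Φ (DΦ u) u) (hDΦ : HasFDerivAt DΦ D2Φ u)
    (hu : φ (Φ u) = u) (v w : H)
    (hfirst : ∀ᶠ x in 𝓝 u,
      ℓ (DΦ x w) = ⟪w, χ (Φ x)⟫_ℝ + ⟪x - φ (Φ x), χ' (Φ x) (DΦ x w)⟫_ℝ) :
    ℓ (D2Φ v w) =
      ⟪w, χ' (Φ u) (DΦ u v)⟫_ℝ + ⟪v - φ' (DΦ u v), χ' (Φ u) (DΦ u w)⟫_ℝ := by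
  have lhs_deriv : HasFDerivAt (fun x ↦ ℓ (DΦ x w)) (ℓ.comp (D2Φ.flip w)) u :=
    ℓ.hasFDerivAt.comp u (by simpa using hDΦ.clm_apply (hasFDerivAt_const w u))
  have normal_deriv : HasFDerivAt (fun x ↦ ⟪w, χ (Φ x)⟫_ℝ)
      ((innerSL ℝ w).comp ((χ' (Φ u)).comp (DΦ u))) u :=
    (innerSL ℝ w).hasFDerivAt.comp u (hχ.comp u hΦ)
  have χ_deriv_continuousAt : ContinuousAt (fun x ↦ χ' (Φ x) (DΦ x w)) u :=
    (hχ'.comp hΦ.continuousAt).clm_apply (hDΦ.continuousAt.clm_apply continuousAt_const)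
  have offset_deriv := hasFDerivAt_bilinear_of_left_eq_zero (innerSL ℝ)
    (hasFDerivAt_sub_comp_phase hφ hΦ) (by simp [hu]) χ_deriv_continuousAt
  have derivs_eq :=
    lhs_deriv.unique ((normal_deriv.fun_add offset_deriv).congr_of_eventuallyEq hfirst)
  exact DFunLike.congr_fun derivs_eq v

theorem phase_second_deriv {DΦ : H → H →L[ℝ] E} {D2Φ : H →L[ℝ] H →L[ℝ] E}
    {φ' χ' : E → E →L[ℝ] H} {ℓ : E →L[ℝ] ℝ} {α : E}
    (hφ : ∀ᶠ β in 𝓝 α, HasFDerivAt φ (φ' β) β) (hχ : ∀ᶠ β in 𝓝 α, HasFDerivAt χ (χ' β) β)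
    (hχ' : ContinuousAt χ' α) (hΦ : ∀ᶠ u in 𝓝 (φ α), HasFDerivAt Φ (DΦ u) u)
    (hDΦ : HasFDerivAt DΦ D2Φ (φ α))
    (hvar : ∀ᶠ u in 𝓝 (φ α), ⟪u - φ (Φ u), χ (Φ u)⟫_ℝ = 0)
    (hbio : ∀ᶠ β in 𝓝 α, ∀ a, ⟪φ' β a, χ β⟫_ℝ = ℓ a) (hΦα : Φ (φ α) = α) (v w : H) :
    ℓ (D2Φ v w) = ⟪w, χ' α (DΦ (φ α) v)⟫_ℝ + ⟪v, χ' α (DΦ (φ α) w)⟫_ℝ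
      - ⟪φ' α (DΦ (φ α) v), χ' α (DΦ (φ α) w)⟫_ℝ := by
  have phase_tendsto : Tendsto Φ (𝓝 (φ α)) (𝓝 α) := by
    simpa only [ContinuousAt, hΦα] using hΦ.self_of_nhds.continuousAt
  have first_deriv : ∀ᶠ u in 𝓝 (φ α),
      ℓ (DΦ u w) = ⟪w, χ (Φ u)⟫_ℝ + ⟪u - φ (Φ u), χ' (Φ u) (DΦ u w)⟫_ℝ := by
    filter_upwards [phase_tendsto.eventually hφ, phase_tendsto.eventually hχ, hΦ,
      hvar.eventually_nhds, phase_tendsto.eventually hbio] with u hφu hχu hΦu hvaru hbiou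
    rw [← hbiou, inner_tangent_phase_deriv hφu hχu hΦu hvaru]
  have second_deriv := phase_second_deriv_of_first_deriv (φ' := φ' α)
    (by simpa only [hΦα] using hφ.self_of_nhds) (by simpa only [hΦα] using hχ.self_of_nhds)
    (by simpa only [hΦα] using hχ') hΦ.self_of_nhds hDΦ (by rw [hΦα]) v w first_deriv
  rw [second_deriv, hΦα, inner_sub_left, add_sub_assoc]

end PhaseMap

theorem phase_map_second_derivative_on_manifold_general
    {ι H : Type*} [Fintype ι] [DecidableEq ι] [NormedAddCommGroup H] [InnerProductSpace ℝ H]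
    {φ : EuclideanSpace ℝ ι → H} {ψ : ι → EuclideanSpace ℝ ι → H}
    {Φ : H → EuclideanSpace ℝ ι} {α : EuclideanSpace ℝ ι}
    {DΦ : H → H →L[ℝ] EuclideanSpace ℝ ι} {D2Φ : H →L[ℝ] H →L[ℝ] EuclideanSpace ℝ ι}
    (hφ : ∀ᶠ β in 𝓝 α, DifferentiableAt ℝ φ β) (hψ : ∀ i, ContDiffAt ℝ 1 (ψ i) α)
    (hΦ : ∀ᶠ u in 𝓝 (φ α), HasFDerivAt Φ (DΦ u) u) (hDΦ : HasFDerivAt DΦ D2Φ (φ α))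
    (hvar : ∀ᶠ u in 𝓝 (φ α), ∀ i, ⟪u - φ (Φ u), ψ i (Φ u)⟫_ℝ = 0)
    (hbio : ∀ᶠ β in 𝓝 α, ∀ i j,
      ⟪ψ i β, fderiv ℝ φ β (EuclideanSpace.single j 1)⟫_ℝ = if i = j then (1 : ℝ) else 0)
    (hΦα : Φ (φ α) = α) (v w : H) (i : ι) :
    D2Φ v w i
      = ∑ j, ⟪ψ j α, v⟫_ℝ * ⟪fderiv ℝ (ψ i) α (EuclideanSpace.single j 1), w⟫_ℝ
        + ∑ j, ⟪ψ j α, w⟫_ℝ * ⟪fderiv ℝ (ψ i) α (EuclideanSpace.single j 1), v⟫_ℝ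
        - ∑ j, ∑ k,
            ⟪fderiv ℝ φ α (EuclideanSpace.single j 1),
              fderiv ℝ (ψ i) α (EuclideanSpace.single k 1)⟫_ℝ
              * ⟪ψ j α, v⟫_ℝ * ⟪ψ k α, w⟫_ℝ := by
  have phase_deriv_coord (x : H) (j : ι) : DΦ (φ α) x j = ⟪ψ j α, x⟫_ℝ :=
    phase_deriv_on_manifold (ℓ := fun a ↦ a j) hφ.self_of_nhds.hasFDerivAt
      (hψ j).differentiableAt_one.hasFDerivAt hΦ.self_of_nhds (hvar.mono fun _ h ↦ h j)
      (inner_apply_eq_coord_of_biorthogonal (hbio.self_of_nhds j)) hΦα x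
  have ψ_deriv : ∀ᶠ β in 𝓝 α, HasFDerivAt (ψ i) (fderiv ℝ (ψ i) β) β :=
    ((hψ i).eventually (by simp)).mono fun _ h ↦ h.differentiableAt_one.hasFDerivAt
  have second_deriv := phase_second_deriv (ℓ := EuclideanSpace.proj i)
    (hφ.mono fun _ h ↦ h.hasFDerivAt) ψ_deriv ((hψ i).continuousAt_fderiv one_ne_zero) hΦ hDΦ
    (hvar.mono fun _ h ↦ h i)
    (hbio.mono fun _ h ↦ inner_apply_eq_coord_of_biorthogonal (h i)) hΦα v w
  rw [inner_apply_apply_eq_sum_sum, inner_apply_eq_sum _ _ v, inner_apply_eq_sum _ _ w]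
    at second_deriv
  simpa only [phase_deriv_coord, PiLp.proj_apply] using second_deriv

/-- In the phase-map setup, with `φ` and the `ψ^i` twice continuously
differentiable and `Φ` twice Fréchet differentiable on `O`, at an on-manifold point
(`φ_α ∈ O`, `Φ(φ_α) = α`) the second derivative of the phase map is
`(D²Φ(φ_α)·w·w)^i = 2 Σ_j ⟪ψ^j_α, w⟫ ⟪ψ^i_{α,j}, w⟫ - Σ_{j,k} ⟪φ_{α,j}, ψ^i_{α,k}⟫ ⟪ψ^j_α, w⟫ ⟪ψ^k_α, w⟫`. -/
theorem phase_map_second_derivative_on_manifold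
    {H : Type*} [NormedAddCommGroup H] [InnerProductSpace ℝ H] [CompleteSpace H]
    {m : ℕ} (hm : 1 ≤ m)
    (O : Set H) (hO : IsOpen O)
    (φ : EuclideanSpace ℝ (Fin m) → H) (hφ : ContDiff ℝ 2 φ)
    (ψ : Fin m → EuclideanSpace ℝ (Fin m) → H) (hψ : ∀ i, ContDiff ℝ 2 (ψ i))
    (Φ : H → EuclideanSpace ℝ (Fin m))
    (DΦ : H → H →L[ℝ] EuclideanSpace ℝ (Fin m))
    (D2Φ : H → H →L[ℝ] H →L[ℝ] EuclideanSpace ℝ (Fin m))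
    (hΦ : ∀ u ∈ O, HasFDerivAt Φ (DΦ u) u)
    (hΦ2 : ∀ u ∈ O, HasFDerivAt DΦ (D2Φ u) u)
    (hvar : ∀ u ∈ O, ∀ i : Fin m, ⟪u - φ (Φ u), ψ i (Φ u)⟫_ℝ = 0)
    (hbio : ∀ (α : EuclideanSpace ℝ (Fin m)) (i j : Fin m),
      ⟪ψ i α, fderiv ℝ φ α (EuclideanSpace.single j 1)⟫_ℝ = if i = j then (1:ℝ) else 0)
    (α : EuclideanSpace ℝ (Fin m)) (hmem : φ α ∈ O) (hΦα : Φ (φ α) = α) :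
    ∀ (w : H) (i : Fin m),
      (D2Φ (φ α) w w) i
        = 2 * ∑ j, ⟪ψ j α, w⟫_ℝ * ⟪fderiv ℝ (ψ i) α (EuclideanSpace.single j 1), w⟫_ℝ
          - ∑ j, ∑ k,
              ⟪fderiv ℝ φ α (EuclideanSpace.single j 1),
                fderiv ℝ (ψ i) α (EuclideanSpace.single k 1)⟫_ℝ
                * ⟪ψ j α, w⟫_ℝ * ⟪ψ k α, w⟫_ℝ := by
  intro w i
  rw [two_mul]
  exact phase_map_second_derivative_on_manifold_general
    (.of_forall (hφ.differentiable two_ne_zero)) (fun j ↦ (hψ j).contDiffAt.of_le one_le_two)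
    ((hO.eventually_mem hmem).mono hΦ) (hΦ2 _ hmem) ((hO.eventually_mem hmem).mono hvar)
    (.of_forall hbio) hΦα w w i
end

section
/- Let 𝔠 ≥ 1, b > 0 and κ > 0, and set Δt := b⁻¹ log(4𝔠). Let h : [0, Δt] → [0,∞) be continuous with h(0) ≤ κ/(2𝔠), and let Z ≥ 0 be a constant such that for every t ∈ [0, Δt] satisfying h(s) ≤ κ for all s ∈ [0, t], one has h(t) ≤ 𝔠 e^{−bt} h(0) + κ/(8𝔠) + Z. If either h(Δt) > κ/(2𝔠) or h(t) > κ for some t ∈ [0, Δt], then Z ≥ κ/(4𝔠). -/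
/-! Suppose `Z ≤ κ/(4𝔠)`. The bound on `h` is at most `κ/2 + κ/(8𝔠) + κ/(4𝔠)`, which is strictly
below `κ` as soon as `𝔠 > 3/4`, so a continuity argument keeps `h` below `κ` on the whole block. The
bound is therefore available at the endpoint, where `𝔠 e^{-bΔt} ≤ 1/4` and hence
`h(Δt) ≤ κ/(8𝔠) + κ/(8𝔠) + κ/(4𝔠) = κ/(2𝔠)`: there is no escape. -/

open Set

theorem forall_Icc_lt_of_forall_Icc_le_imp_lt {α β : Type*} [ConditionallyCompleteLinearOrder α]
    [TopologicalSpace α] [OrderTopology α] [DenselyOrdered α] [LinearOrder β] [TopologicalSpace β]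
    [OrderClosedTopology β] {f : α → β} {a b : α} {k : β} (hf : ContinuousOn f (Icc a b))
    (ha : f a ≤ k) (hstep : ∀ t ∈ Icc a b, (∀ s ∈ Icc a t, f s ≤ k) → f t < k) :
    ∀ t ∈ Icc a b, f t < k := by
  have hclosed : IsClosed ({t | f t ≤ k} ∩ Icc a b) := by
    rw [inter_comm]
    exact hf.preimage_isClosed_of_isClosed isClosed_Icc isClosed_Iic
  have hle : Icc a b ⊆ {t | f t ≤ k} := by
    refine hclosed.Icc_subset_of_forall_mem_nhdsGT_of_Icc_subset ha fun t ht hprefix => ?_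
    have hlt : f t < k := hstep t (Ico_subset_Icc_self ht) hprefix
    have hright : ContinuousWithinAt f (Ioi t) t :=
      (hf t (Ico_subset_Icc_self ht)).mono_of_mem_nhdsWithin (Icc_mem_nhdsGT_of_mem ht)
    filter_upwards [hright.eventually_lt_const hlt] with s hs using hs.le
  exact fun t ht => hstep t ht fun s hs => hle ⟨hs.1, hs.2.trans ht.2⟩

theorem mul_exp_neg_mul_le_inv {b c r T : ℝ} (hb : 0 < b) (hc : 0 < c) (hr : 0 < r)
    (hT : b⁻¹ * Real.log (r * c) ≤ T) : c * Real.exp (-b * T) ≤ r⁻¹ := by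
  have hlog : Real.log (r * c) ≤ b * T := (inv_mul_le_iff₀ hb).1 hT
  calc c * Real.exp (-b * T)
      ≤ c * Real.exp (-Real.log (r * c)) := by gcongr; linarith
    _ = r⁻¹ := by rw [Real.exp_neg, Real.exp_log (mul_pos hr hc)]; field_simp

section AmplitudeBound

variable {a c κ x Z : ℝ}

theorem decay_add_drift_add_noise_lt (ha : 0 ≤ a) (hac : a ≤ c) (hc : 3 / 4 < c) (hκ : 0 < κ)
    (hx : x ≤ κ / (2 * c)) (hZ : Z ≤ κ / (4 * c)) : a * x + κ / (8 * c) + Z < κ := by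
  have hc₀ : 0 < c := by linarith
  calc a * x + κ / (8 * c) + Z
      ≤ a * (κ / (2 * c)) + κ / (8 * c) + κ / (4 * c) := by gcongr
    _ ≤ c * (κ / (2 * c)) + κ / (8 * c) + κ / (4 * c) := by gcongr
    _ = κ / 2 + κ / 2 * (3 / 4 / c) := by field_simp; ring
    _ < κ / 2 + κ / 2 * 1 := by gcongr; exact (div_lt_one hc₀).2 hc
    _ = κ := by ring

theorem decay_add_drift_add_noise_le (ha : 0 ≤ a) (ha4 : a ≤ 4⁻¹) (hc : 0 ≤ c) (hκ : 0 ≤ κ)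
    (hx : x ≤ κ / (2 * c)) (hZ : Z ≤ κ / (4 * c)) :
    a * x + κ / (8 * c) + Z ≤ κ / (2 * c) :=
  calc a * x + κ / (8 * c) + Z
      ≤ a * (κ / (2 * c)) + κ / (8 * c) + κ / (4 * c) := by gcongr
    _ ≤ 4⁻¹ * (κ / (2 * c)) + κ / (8 * c) + κ / (4 * c) := by gcongr
    _ = κ / (2 * c) := by ring

end AmplitudeBound

theorem block_escape_forces_large_noise_general {b c κ Δt Z : ℝ} {h : ℝ → ℝ}
    (hc : 3 / 4 < c) (hb : 0 < b) (hκ : 0 < κ) (hΔt : b⁻¹ * Real.log (4 * c) ≤ Δt)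
    (hcont : ContinuousOn h (Icc 0 Δt)) (h0 : h 0 ≤ κ / (2 * c))
    (hbound : ∀ t ∈ Icc 0 Δt, (∀ s ∈ Icc 0 t, h s ≤ κ) →
      h t ≤ c * Real.exp (-b * t) * h 0 + κ / (8 * c) + Z)
    (hesc : κ / (2 * c) < h Δt ∨ ∃ t ∈ Icc 0 Δt, κ < h t) :
    κ / (4 * c) < Z := by
  have hc₀ : 0 < c := by linarith
  have hΔt₀ : 0 ≤ Δt :=
    (mul_nonneg (inv_nonneg.2 hb.le) (Real.log_nonneg (by linarith))).trans hΔt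
  have hdecay₀ (t : ℝ) : 0 ≤ c * Real.exp (-b * t) := by positivity
  have hdecay {t : ℝ} (ht : 0 ≤ t) : c * Real.exp (-b * t) ≤ c :=
    mul_le_of_le_one_right hc₀.le <|
      Real.exp_le_one_iff.2 (mul_nonpos_of_nonpos_of_nonneg (neg_nonpos.2 hb.le) ht)
  by_contra! hZ
  have hrunning : ∀ t ∈ Icc 0 Δt, h t < κ :=
    forall_Icc_lt_of_forall_Icc_le_imp_lt hcont (h0.trans (div_le_self hκ.le (by linarith)))
      fun t ht hle => (hbound t ht hle).trans_lt <|
        decay_add_drift_add_noise_lt (hdecay₀ t) (hdecay ht.1) hc hκ h0 hZ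
  have hendpoint : h Δt ≤ κ / (2 * c) :=
    (hbound Δt (right_mem_Icc.2 hΔt₀) fun s hs => (hrunning s hs).le).trans <|
      decay_add_drift_add_noise_le (hdecay₀ Δt)
        (mul_exp_neg_mul_le_inv hb hc₀ four_pos hΔt) hc₀.le hκ.le h0 hZ
  rcases hesc with hend | ⟨t, ht, hκt⟩
  · exact hend.not_ge hendpoint
  · exact hκt.not_gt (hrunning t ht)

/-- Pathwise core of the event-inclusion lemma in the exponential exit-time
theorem: on a time block of length `Δt = b⁻¹ log(4𝔠)`, if the amplitude `h` starts below
`κ/(2𝔠)` and, as long as it stays below `κ`, obeys `h(t) ≤ 𝔠 e^{-bt} h(0) + κ/(8𝔠) + Z`, then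
an escape (endpoint above `κ/(2𝔠)`, or running amplitude above `κ`) forces the stochastic
forcing bound `Z` to exceed `κ/(4𝔠)`. -/
theorem block_escape_forces_large_noise
    (frakc b κ : ℝ) (hfrakc : 1 ≤ frakc) (hb : 0 < b) (hκ : 0 < κ)
    (Δt : ℝ) (hΔt : Δt = b⁻¹ * Real.log (4 * frakc))
    (h : ℝ → ℝ) (hcont : ContinuousOn h (Set.Icc 0 Δt))
    (hnonneg : ∀ t ∈ Set.Icc (0:ℝ) Δt, 0 ≤ h t)
    (h0 : h 0 ≤ κ / (2 * frakc))
    (Z : ℝ) (hZ : 0 ≤ Z)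
    (hbound : ∀ t ∈ Set.Icc (0:ℝ) Δt, (∀ s ∈ Set.Icc (0:ℝ) t, h s ≤ κ) →
      h t ≤ frakc * Real.exp (-b * t) * h 0 + κ / (8 * frakc) + Z)
    (hesc : κ / (2 * frakc) < h Δt ∨ ∃ t ∈ Set.Icc (0:ℝ) Δt, κ < h t) :
    κ / (4 * frakc) ≤ Z := by
  exact (block_escape_forces_large_noise_general (by linarith) hb hκ hΔt.ge hcont h0 hbound
    hesc).le
end

section
/- Let (Ω, 𝓕, ℙ) be a probability space, (S, 𝓢) a measurable space, t > 0, and X : [0,t] × Ω → S jointly measurable. Let ḡ : S → ℝ be measurable with |ḡ(x)| ≤ M for all x ∈ S, and suppose there are constants T₀ ∈ [0, t] and η ≥ 0 such that E[ḡ(X_r) ḡ(X_s)] ≤ η whenever r, s ∈ [0,t] satisfy |r − s| ≥ T₀. Then for every δ > 0: ℙ( |∫₀^t ḡ(X_s(ω)) ds| ≥ t δ/2 ) ≤ (4/δ²) ( 2 T₀ M²/t + η ). -/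
open MeasureTheory

/-!
By Chebyshev's inequality it suffices to bound the second moment of the time integral. Fubini turns
this moment into the integral of the two-time correlation `(r, s) ↦ E[f r * f s]` over the square
`[0, t]²`. The correlation is at most `η`, except on the strip `|r - s| < T₀`, where it is at most
`M ^ 2`; each slice of the strip has length at most `2 * T₀`, so its area is at most `2 * T₀ * t`.
-/

open Function (uncurry)

theorem measure_le_norm_le_ofReal_integral_norm_pow_div {Ω E : Type*} [MeasurableSpace Ω]
    {P : Measure Ω} [NormedAddCommGroup E] {Y : Ω → E} {p : ℕ}
    (hY : Integrable (fun ω => ‖Y ω‖ ^ p) P) {c : ℝ} (hc : 0 < c) :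
    P {ω | c ≤ ‖Y ω‖} ≤ ENNReal.ofReal ((∫ ω, ‖Y ω‖ ^ p ∂P) / c ^ p) := by
  have hpow_nonneg : ∀ ω, 0 ≤ ‖Y ω‖ ^ p := fun ω => by positivity
  have hfinite : P {ω | c ^ p ≤ ‖Y ω‖ ^ p} < ⊤ := by
    simpa only [Real.norm_of_nonneg (hpow_nonneg _)] using
      hY.measure_norm_ge_lt_top (pow_pos hc p)
  calc P {ω | c ≤ ‖Y ω‖}
      ≤ P {ω | c ^ p ≤ ‖Y ω‖ ^ p} := measure_mono fun _ hω => pow_le_pow_left₀ hc.le hω p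
    _ = ENNReal.ofReal (P.real {ω | c ^ p ≤ ‖Y ω‖ ^ p}) := (ofReal_measureReal hfinite.ne).symm
    _ ≤ ENNReal.ofReal ((∫ ω, ‖Y ω‖ ^ p ∂P) / c ^ p) := by
        refine ENNReal.ofReal_le_ofReal ((le_div_iff₀' (pow_pos hc p)).2 ?_)
        exact mul_meas_ge_le_integral_of_nonneg (ae_of_all _ hpow_nonneg) hY (c ^ p)

theorem integral_le_mul_measureReal_add_mul_measureReal_compl {β : Type*} [MeasurableSpace β]
    {μ : Measure β} [IsFiniteMeasure μ] {h : β → ℝ} (hh : Integrable h μ) {B : Set β}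
    (hB : MeasurableSet B) {a b : ℝ} (ha : ∀ x ∈ B, h x ≤ a) (hb : ∀ x ∈ Bᶜ, h x ≤ b) :
    ∫ x, h x ∂μ ≤ a * μ.real B + b * μ.real Bᶜ := by
  have hset {D : Set β} {c : ℝ} (hD : MeasurableSet D) (hc : ∀ x ∈ D, h x ≤ c) :
      ∫ x in D, h x ∂μ ≤ c * μ.real D :=
    (setIntegral_mono_on hh.integrableOn (integrable_const c) hD hc).trans_eq
      (by rw [setIntegral_const, smul_eq_mul, mul_comm])
  rw [← integral_add_compl hB hh]
  exact add_le_add (hset hB ha) (hset hB.compl hb)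

-- The arguments of `dist` are swapped so that the slice of the set at `x` is literally `ball x T`.
theorem measureReal_prod_dist_lt_le {α : Type*} [PseudoMetricSpace α]
    [SecondCountableTopology α] [MeasurableSpace α] [OpensMeasurableSpace α] {μ : Measure α}
    [IsFiniteMeasure μ] {T C : ℝ} (hball : ∀ x, μ.real (Metric.ball x T) ≤ C) :
    (μ.prod μ).real {p | dist p.2 p.1 < T} ≤ C * μ.real Set.univ := by
  have hmeas : MeasurableSet {p : α × α | dist p.2 p.1 < T} :=
    measurableSet_lt (measurable_snd.dist measurable_fst) measurable_const
  have hslice : Integrable (fun x => μ.real (Metric.ball x T)) μ :=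
    Measure.integrable_measure_prodMk_left hmeas (measure_ne_top _ _)
  calc (μ.prod μ).real {p | dist p.2 p.1 < T}
      = (∫⁻ x, μ (Metric.ball x T) ∂μ).toReal := congrArg _ (Measure.prod_apply hmeas)
    _ = ∫ x, μ.real (Metric.ball x T) ∂μ :=
        (integral_toReal (measurable_measure_prodMk_left hmeas).aemeasurable
          (ae_of_all _ fun _ => measure_lt_top _ _)).symm
    _ ≤ ∫ _, C ∂μ := integral_mono hslice (integrable_const C) hball
    _ = C * μ.real Set.univ := by rw [integral_const, smul_eq_mul, mul_comm]

section SecondMoment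

variable {α Ω : Type*} [MeasurableSpace α] [MeasurableSpace Ω] {μ : Measure α} {P : Measure Ω}

theorem sq_integral_eq_integral_prod {𝕜 : Type*} [RCLike 𝕜] [SFinite μ] (h : α → 𝕜) :
    (∫ s, h s ∂μ) ^ 2 = ∫ p, h p.1 * h p.2 ∂(μ.prod μ) := by
  rw [sq, integral_prod_mul]

theorem integrable_sq_integral {𝕜 : Type*} [RCLike 𝕜] [SFinite μ] {f : α → Ω → 𝕜}
    (hf : Integrable (uncurry fun ω (p : α × α) => f p.1 ω * f p.2 ω) (P.prod (μ.prod μ))) :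
    Integrable (fun ω => (∫ s, f s ω ∂μ) ^ 2) P := by
  simpa only [sq_integral_eq_integral_prod, uncurry] using hf.integral_prod_left

theorem integral_sq_integral {𝕜 : Type*} [RCLike 𝕜] [SFinite μ] [SFinite P] {f : α → Ω → 𝕜}
    (hf : Integrable (uncurry fun ω (p : α × α) => f p.1 ω * f p.2 ω) (P.prod (μ.prod μ))) :
    ∫ ω, (∫ s, f s ω ∂μ) ^ 2 ∂P = ∫ p, ∫ ω, f p.1 ω * f p.2 ω ∂P ∂(μ.prod μ) := by
  simpa only [sq_integral_eq_integral_prod] using integral_integral_swap hf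

theorem integrable_mul_of_norm_le {𝕜 : Type*} [RCLike 𝕜] [IsFiniteMeasure μ] [IsFiniteMeasure P]
    {f : α → Ω → 𝕜} (hf : Measurable (uncurry f)) {M : ℝ} (hM : ∀ s ω, ‖f s ω‖ ≤ M) :
    Integrable (uncurry fun ω (p : α × α) => f p.1 ω * f p.2 ω) (P.prod (μ.prod μ)) := by
  have hfst : Measurable fun q : Ω × α × α => f q.2.1 q.1 :=
    hf.comp (measurable_snd.fst.prodMk measurable_fst)
  have hsnd : Measurable fun q : Ω × α × α => f q.2.2 q.1 :=
    hf.comp (measurable_snd.snd.prodMk measurable_fst)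
  exact .of_bound (hfst.mul hsnd).aestronglyMeasurable (M * M)
    (ae_of_all _ fun _ => norm_mul_le_of_le (hM _ _) (hM _ _))

theorem integral_mul_le_sq_of_abs_le [IsProbabilityMeasure P] {Y Z : Ω → ℝ} {M : ℝ}
    (hY : ∀ ω, |Y ω| ≤ M) (hZ : ∀ ω, |Z ω| ≤ M) : ∫ ω, Y ω * Z ω ∂P ≤ M ^ 2 := by
  have hbound : ‖∫ ω, Y ω * Z ω ∂P‖ ≤ M * M * P.real Set.univ :=
    norm_integral_le_of_norm_le_const (ae_of_all _ fun ω => norm_mul_le_of_le (hY ω) (hZ ω))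
  rw [probReal_univ, mul_one, ← sq] at hbound
  exact (le_abs_self _).trans hbound

theorem integral_sq_integral_le_of_correlation_le [PseudoMetricSpace α]
    [SecondCountableTopology α] [OpensMeasurableSpace α] [IsFiniteMeasure μ]
    [IsProbabilityMeasure P] {f : α → Ω → ℝ} (hf : Measurable (uncurry f)) {M : ℝ}
    (hM : ∀ s ω, |f s ω| ≤ M) {T C η : ℝ} (hη : 0 ≤ η)
    (hball : ∀ r, μ.real (Metric.ball r T) ≤ C)
    (hcorr : ∀ r s, T ≤ dist r s → ∫ ω, f r ω * f s ω ∂P ≤ η) :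
    ∫ ω, (∫ s, f s ω ∂μ) ^ 2 ∂P
      ≤ M ^ 2 * (C * μ.real Set.univ) + η * μ.real Set.univ ^ 2 := by
  have hint := integrable_mul_of_norm_le (μ := μ) (P := P) hf hM
  have hstrip : MeasurableSet {p : α × α | dist p.2 p.1 < T} :=
    measurableSet_lt (measurable_snd.dist measurable_fst) measurable_const
  have hcompl : (μ.prod μ).real {p | dist p.2 p.1 < T}ᶜ ≤ μ.real Set.univ ^ 2 := by
    rw [sq, ← measureReal_prod_prod, Set.univ_prod_univ]
    exact measureReal_mono (Set.subset_univ _)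
  calc ∫ ω, (∫ s, f s ω ∂μ) ^ 2 ∂P
      = ∫ p, ∫ ω, f p.1 ω * f p.2 ω ∂P ∂(μ.prod μ) := integral_sq_integral hint
    _ ≤ M ^ 2 * (μ.prod μ).real {p | dist p.2 p.1 < T}
          + η * (μ.prod μ).real {p | dist p.2 p.1 < T}ᶜ :=
        integral_le_mul_measureReal_add_mul_measureReal_compl hint.integral_prod_right hstrip
          (fun p _ => integral_mul_le_sq_of_abs_le (hM p.1) (hM p.2))
          (fun p hp => hcorr p.1 p.2 (by simpa [dist_comm] using hp))
    _ ≤ M ^ 2 * (C * μ.real Set.univ) + η * μ.real Set.univ ^ 2 := by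
        gcongr
        exact measureReal_prod_dist_lt_le hball

end SecondMoment

attribute [local instance] Measure.Subtype.measureSpace

section Icc

variable {a b : ℝ}

instance isFiniteMeasure_volume_Icc : IsFiniteMeasure (volume : Measure (Set.Icc a b)) where
  measure_univ_lt_top := by
    rw [Measure.Subtype.volume_univ measurableSet_Icc.nullMeasurableSet]
    exact measure_Icc_lt_top

theorem volume_real_univ_Icc (hab : a ≤ b) :
    (volume : Measure (Set.Icc a b)).real Set.univ = b - a := by
  rw [measureReal_def, Measure.Subtype.volume_univ measurableSet_Icc.nullMeasurableSet,
    ← measureReal_def, Real.volume_real_Icc_of_le hab]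

theorem volume_real_ball_Icc_le (r : Set.Icc a b) {T : ℝ} (hT : 0 ≤ T) :
    volume.real (Metric.ball r T) ≤ 2 * T := by
  rw [← Real.volume_real_ball hT (a := (r : ℝ))]
  refine ENNReal.toReal_mono measure_ball_lt_top.ne ?_
  rw [← Subtype.preimage_ball,
    volume_preimage_coe measurableSet_Icc.nullMeasurableSet Metric.isOpen_ball.measurableSet]
  exact measure_mono Set.inter_subset_left

theorem intervalIntegral_eq_integral_Icc {E : Type*} [NormedAddCommGroup E] [NormedSpace ℝ E]
    (hab : a ≤ b) (f : ℝ → E) : ∫ s in a..b, f s = ∫ s : Set.Icc a b, f s := by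
  rw [intervalIntegral.integral_of_le hab, ← integral_Icc_eq_integral_Ioc,
    integral_subtype measurableSet_Icc]

end Icc

/-- Quantitative Chebyshev/covariance-decay bound for occupation times:
if `|ḡ| ≤ M` and the covariances `E[ḡ(X_r) ḡ(X_s)]` are at most `η` whenever `|r - s| ≥ T₀`,
then `ℙ(|∫₀^t ḡ(X_s) ds| ≥ t δ/2) ≤ (4/δ²)(2 T₀ M²/t + η)`. -/
theorem occupation_time_chebyshev
    {Ω : Type*} [MeasurableSpace Ω] (P : Measure Ω) [IsProbabilityMeasure P]
    {S : Type*} [MeasurableSpace S]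
    (t : ℝ) (ht : 0 < t)
    (X : ℝ → Ω → S)
    (hX : Measurable fun p : Set.Icc (0:ℝ) t × Ω => X p.1.1 p.2)
    (g : S → ℝ) (hg : Measurable g)
    (M : ℝ) (hM : ∀ x : S, |g x| ≤ M)
    (T₀ : ℝ) (hT₀ : T₀ ∈ Set.Icc (0:ℝ) t)
    (η : ℝ) (hη : 0 ≤ η)
    (hcov : ∀ r s : ℝ, r ∈ Set.Icc (0:ℝ) t → s ∈ Set.Icc (0:ℝ) t → T₀ ≤ |r - s| →
      (∫ ω, g (X r ω) * g (X s ω) ∂P) ≤ η)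
    (δ : ℝ) (hδ : 0 < δ) :
    P {ω | t * δ / 2 ≤ |∫ s in (0:ℝ)..t, g (X s ω)|}
      ≤ ENNReal.ofReal ((4 / δ ^ 2) * (2 * T₀ * M ^ 2 / t + η)) := by
  let f : Set.Icc 0 t → Ω → ℝ := fun s ω => g (X s ω)
  have hf : Measurable (uncurry f) := hg.comp hX
  have hfM : ∀ s ω, |f s ω| ≤ M := fun s ω => hM _
  have hsecond : ∫ ω, (∫ s, f s ω) ^ 2 ∂P ≤ M ^ 2 * (2 * T₀ * t) + η * t ^ 2 := by
    simpa only [volume_real_univ_Icc ht.le, sub_zero] using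
      integral_sq_integral_le_of_correlation_le hf hfM hη
        (fun r => volume_real_ball_Icc_le r hT₀.1) (fun r s => hcov r s r.2 s.2)
  have hchebyshev : P {ω | t * δ / 2 ≤ |∫ s, f s ω|}
      ≤ ENNReal.ofReal ((∫ ω, (∫ s, f s ω) ^ 2 ∂P) / (t * δ / 2) ^ 2) := by
    simpa only [Real.norm_eq_abs, sq_abs] using
      measure_le_norm_le_ofReal_integral_norm_pow_div (Y := fun ω => ∫ s, f s ω) (p := 2)
        (by simpa only [Real.norm_eq_abs, sq_abs] using
          integrable_sq_integral (integrable_mul_of_norm_le hf hfM))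
        (by positivity : 0 < t * δ / 2)
  simp only [intervalIntegral_eq_integral_Icc ht.le]
  refine hchebyshev.trans (ENNReal.ofReal_le_ofReal ?_)
  calc (∫ ω, (∫ s, f s ω) ^ 2 ∂P) / (t * δ / 2) ^ 2
      ≤ (M ^ 2 * (2 * T₀ * t) + η * t ^ 2) / (t * δ / 2) ^ 2 := by gcongr
    _ = 4 / δ ^ 2 * (2 * T₀ * M ^ 2 / t + η) := by field_simp; ring
end
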